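/- Type preservation of the CBN translation of the graded-monadic λ-calculus: if Γ ⊢_mon e : τ, then ⟦Γ⟧n ⊢ ⟦e⟧n :^⊥ ⟦τ⟧n in CBPV with effects; in particular, the translated term type-checks with the pure effect ⊥. -/

import Mathlib

set_option autoImplicit false

/-- A preordered monoid of effects `(E, ·, ⊥, ≤eff)`, with a distinguished `tock` effect. -/
structure EffSig (E : Type) where
  op : E → E → E
  bot : E
  tock : E
  le : E → E → Prop
  op_assoc : ∀ a b c, op (op a b) c = op a (op b c)
  bot_op : ∀ a, op bot a = a
  op_bot : ∀ a, op a bot = a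
  le_refl : ∀ a, le a a
  le_trans : ∀ a b c, le a b → le b c → le a c
  le_op : ∀ a b c d, le a b → le c d → le (op a c) (op b d)

namespace CBPVEff

mutual
/-- CBPV value types: `unit`, graded thunks `U_φ B`, positive products, sums. -/
inductive VTy (E : Type) : Type where
  | unit : VTy E
  | thunk : E → CTy E → VTy E
  | prod : VTy E → VTy E → VTy E
  | sum : VTy E → VTy E → VTy E
/-- CBPV computation types: functions, returners `F A`, negative products. -/
inductive CTy (E : Type) : Type where
  | arr : VTy E → CTy E → CTy E
  | F : VTy E → CTy E
  | wth : CTy E → CTy E → CTy E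
end

mutual
/-- CBPV values (de Bruijn indices for variables). -/
inductive Val : Type where
  | var : Nat → Val
  | unit : Val
  | thunk : Comp → Val
  | pair : Val → Val → Val
  | inl : Val → Val
  | inr : Val → Val
/-- CBPV computations. -/
inductive Comp : Type where
  | lam : Comp → Comp
  | app : Comp → Val → Comp
  | force : Val → Comp
  | split : Val → Comp → Comp
  | cpair : Comp → Comp → Comp
  | fst : Comp → Comp
  | snd : Comp → Comp
  | ret : Val → Comp
  | letin : Comp → Comp → Comp
  | seq : Val → Comp → Comp
  | case : Val → Comp → Comp → Comp
  | tick : Comp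
end

mutual
/-- The value typing judgment `Γ ⊢ V : A` of the CBPV type-and-effect system. -/
inductive VHasTy {E : Type} (S : EffSig E) : List (VTy E) → Val → VTy E → Prop where
  | var : ∀ {Γ : List (VTy E)} {x : Nat} {A : VTy E},
      Γ[x]? = some A → VHasTy S Γ (.var x) A
  | unit : ∀ {Γ : List (VTy E)}, VHasTy S Γ .unit .unit
  | thunk : ∀ {Γ : List (VTy E)} {M : Comp} {φ : E} {B : CTy E},
      CHasTy S Γ M φ B → VHasTy S Γ (.thunk M) (.thunk φ B)
  | pair : ∀ {Γ : List (VTy E)} {V₁ V₂ : Val} {A₁ A₂ : VTy E},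
      VHasTy S Γ V₁ A₁ → VHasTy S Γ V₂ A₂ → VHasTy S Γ (.pair V₁ V₂) (.prod A₁ A₂)
  | inl : ∀ {Γ : List (VTy E)} {V : Val} {A₁ A₂ : VTy E},
      VHasTy S Γ V A₁ → VHasTy S Γ (.inl V) (.sum A₁ A₂)
  | inr : ∀ {Γ : List (VTy E)} {V : Val} {A₁ A₂ : VTy E},
      VHasTy S Γ V A₂ → VHasTy S Γ (.inr V) (.sum A₁ A₂)

/-- The computation typing judgment `Γ ⊢ M :^φ B` of the CBPV type-and-effect system. -/
inductive CHasTy {E : Type} (S : EffSig E) : List (VTy E) → Comp → E → CTy E → Prop where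
  | tick : ∀ {Γ : List (VTy E)} {φ : E}, S.le S.tock φ → CHasTy S Γ .tick φ (.F .unit)
  | lam : ∀ {Γ : List (VTy E)} {A : VTy E} {M : Comp} {φ : E} {B : CTy E},
      CHasTy S (A :: Γ) M φ B → CHasTy S Γ (.lam M) φ (.arr A B)
  | app : ∀ {Γ : List (VTy E)} {M : Comp} {V : Val} {A : VTy E} {φ : E} {B : CTy E},
      CHasTy S Γ M φ (.arr A B) → VHasTy S Γ V A → CHasTy S Γ (.app M V) φ B
  | force : ∀ {Γ : List (VTy E)} {V : Val} {φ' φ : E} {B : CTy E},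
      VHasTy S Γ V (.thunk φ' B) → S.le φ' φ → CHasTy S Γ (.force V) φ B
  | ret : ∀ {Γ : List (VTy E)} {V : Val} {A : VTy E} {φ : E},
      VHasTy S Γ V A → S.le S.bot φ → CHasTy S Γ (.ret V) φ (.F A)
  | letin : ∀ {Γ : List (VTy E)} {M N : Comp} {A : VTy E} {φ₁ φ₂ φ : E} {B : CTy E},
      CHasTy S Γ M φ₁ (.F A) → CHasTy S (A :: Γ) N φ₂ B →
      S.le (S.op φ₁ φ₂) φ → CHasTy S Γ (.letin M N) φ B
  | split : ∀ {Γ : List (VTy E)} {V : Val} {A₁ A₂ : VTy E} {N : Comp} {φ : E} {B : CTy E},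
      VHasTy S Γ V (.prod A₁ A₂) → CHasTy S (A₂ :: A₁ :: Γ) N φ B →
      CHasTy S Γ (.split V N) φ B
  | cpair : ∀ {Γ : List (VTy E)} {M₁ M₂ : Comp} {φ : E} {B₁ B₂ : CTy E},
      CHasTy S Γ M₁ φ B₁ → CHasTy S Γ M₂ φ B₂ → CHasTy S Γ (.cpair M₁ M₂) φ (.wth B₁ B₂)
  | fst : ∀ {Γ : List (VTy E)} {M : Comp} {φ : E} {B₁ B₂ : CTy E},
      CHasTy S Γ M φ (.wth B₁ B₂) → CHasTy S Γ (.fst M) φ B₁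
  | snd : ∀ {Γ : List (VTy E)} {M : Comp} {φ : E} {B₁ B₂ : CTy E},
      CHasTy S Γ M φ (.wth B₁ B₂) → CHasTy S Γ (.snd M) φ B₂
  | seq : ∀ {Γ : List (VTy E)} {V : Val} {M : Comp} {φ : E} {B : CTy E},
      VHasTy S Γ V .unit → CHasTy S Γ M φ B → CHasTy S Γ (.seq V M) φ B
  | case : ∀ {Γ : List (VTy E)} {V : Val} {A₁ A₂ : VTy E} {M₁ M₂ : Comp} {φ : E} {B : CTy E},
      VHasTy S Γ V (.sum A₁ A₂) → CHasTy S (A₁ :: Γ) M₁ φ B →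
      CHasTy S (A₂ :: Γ) M₂ φ B → CHasTy S Γ (.case V M₁ M₂) φ B
end

/-- Lifting a de Bruijn renaming under one binder. -/
def liftRen (f : Nat → Nat) : Nat → Nat
  | 0 => 0
  | n + 1 => f n + 1

mutual
/-- Renaming of values. -/
def Val.rename : Val → (Nat → Nat) → Val
  | .var x, f => .var (f x)
  | .unit, _ => .unit
  | .thunk M, f => .thunk (M.rename f)
  | .pair V₁ V₂, f => .pair (V₁.rename f) (V₂.rename f)
  | .inl V, f => .inl (V.rename f)
  | .inr V, f => .inr (V.rename f)
/-- Renaming of computations. -/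
def Comp.rename : Comp → (Nat → Nat) → Comp
  | .lam M, f => .lam (M.rename (liftRen f))
  | .app M V, f => .app (M.rename f) (V.rename f)
  | .force V, f => .force (V.rename f)
  | .split V N, f => .split (V.rename f) (N.rename (liftRen (liftRen f)))
  | .cpair M₁ M₂, f => .cpair (M₁.rename f) (M₂.rename f)
  | .fst M, f => .fst (M.rename f)
  | .snd M, f => .snd (M.rename f)
  | .ret V, f => .ret (V.rename f)
  | .letin M N, f => .letin (M.rename f) (N.rename (liftRen f))
  | .seq V M, f => .seq (V.rename f) (M.rename f)
  | .case V M₁ M₂, f => .case (V.rename f) (M₁.rename (liftRen f)) (M₂.rename (liftRen f))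
  | .tick, _ => .tick
end

/-- Weakening: shift all free variables up by one. -/
def shift (M : Comp) : Comp := M.rename Nat.succ

/-- Weakening under one binder: shift all free variables except index 0 up by one. -/
def shift1 (M : Comp) : Comp := M.rename (liftRen Nat.succ)

/-- Weakening under two binders. -/
def shift2 (M : Comp) : Comp := M.rename (liftRen (liftRen Nat.succ))

end CBPVEff

namespace LamMon

/-- Types of the simply-typed λ-calculus with a graded monad `T_φ`. -/
inductive MTy (E : Type) : Type where
  | unit : MTy E
  | arr : MTy E → MTy E → MTy E
  | wth : MTy E → MTy E → MTy E
  | sum : MTy E → MTy E → MTy E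
  | T : E → MTy E → MTy E

/-- Terms of the graded-monadic λ-calculus (de Bruijn indices). -/
inductive MTm : Type where
  | var : Nat → MTm
  | lam : MTm → MTm
  | app : MTm → MTm → MTm
  | unit : MTm
  | seq : MTm → MTm → MTm
  | wpair : MTm → MTm → MTm
  | fst : MTm → MTm
  | snd : MTm → MTm
  | inl : MTm → MTm
  | inr : MTm → MTm
  | case : MTm → MTm → MTm → MTm
  | ret : MTm → MTm
  | bind : MTm → MTm → MTm
  | tick : MTm

/-- The typing judgment `Γ ⊢_mon e : τ`: a pure λ-calculus whose effects are
isolated inside the graded monadic type `T_φ`. -/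
inductive HasTy {E : Type} (S : EffSig E) : List (MTy E) → MTm → MTy E → Prop where
  | var : ∀ {Γ : List (MTy E)} {x : Nat} {τ : MTy E},
      Γ[x]? = some τ → HasTy S Γ (.var x) τ
  | lam : ∀ {Γ : List (MTy E)} {e : MTm} {τ₁ τ₂ : MTy E},
      HasTy S (τ₁ :: Γ) e τ₂ → HasTy S Γ (.lam e) (.arr τ₁ τ₂)
  | app : ∀ {Γ : List (MTy E)} {e₁ e₂ : MTm} {τ₁ τ₂ : MTy E},
      HasTy S Γ e₁ (.arr τ₁ τ₂) → HasTy S Γ e₂ τ₁ → HasTy S Γ (.app e₁ e₂) τ₂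
  | unit : ∀ {Γ : List (MTy E)}, HasTy S Γ .unit .unit
  | seq : ∀ {Γ : List (MTy E)} {e₁ e₂ : MTm} {τ : MTy E},
      HasTy S Γ e₁ .unit → HasTy S Γ e₂ τ → HasTy S Γ (.seq e₁ e₂) τ
  | wpair : ∀ {Γ : List (MTy E)} {e₁ e₂ : MTm} {τ₁ τ₂ : MTy E},
      HasTy S Γ e₁ τ₁ → HasTy S Γ e₂ τ₂ → HasTy S Γ (.wpair e₁ e₂) (.wth τ₁ τ₂)
  | fst : ∀ {Γ : List (MTy E)} {e : MTm} {τ₁ τ₂ : MTy E},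
      HasTy S Γ e (.wth τ₁ τ₂) → HasTy S Γ (.fst e) τ₁
  | snd : ∀ {Γ : List (MTy E)} {e : MTm} {τ₁ τ₂ : MTy E},
      HasTy S Γ e (.wth τ₁ τ₂) → HasTy S Γ (.snd e) τ₂
  | inl : ∀ {Γ : List (MTy E)} {e : MTm} {τ₁ τ₂ : MTy E},
      HasTy S Γ e τ₁ → HasTy S Γ (.inl e) (.sum τ₁ τ₂)
  | inr : ∀ {Γ : List (MTy E)} {e : MTm} {τ₁ τ₂ : MTy E},
      HasTy S Γ e τ₂ → HasTy S Γ (.inr e) (.sum τ₁ τ₂)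
  | case : ∀ {Γ : List (MTy E)} {e e₁ e₂ : MTm} {τ₁ τ₂ τ : MTy E},
      HasTy S Γ e (.sum τ₁ τ₂) → HasTy S (τ₁ :: Γ) e₁ τ →
      HasTy S (τ₂ :: Γ) e₂ τ → HasTy S Γ (.case e e₁ e₂) τ
  | ret : ∀ {Γ : List (MTy E)} {e : MTm} {τ : MTy E} {φ : E},
      HasTy S Γ e τ → S.le S.bot φ → HasTy S Γ (.ret e) (.T φ τ)
  | bind : ∀ {Γ : List (MTy E)} {e₁ e₂ : MTm} {τ₁ τ₂ : MTy E} {φ₁ φ₂ φ : E},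
      HasTy S Γ e₁ (.T φ₁ τ₁) → HasTy S (τ₁ :: Γ) e₂ (.T φ₂ τ₂) →
      S.le (S.op φ₁ φ₂) φ → HasTy S Γ (.bind e₁ e₂) (.T φ τ₂)
  | tick : ∀ {Γ : List (MTy E)} {φ : E}, S.le S.tock φ → HasTy S Γ .tick (.T φ .unit)

end LamMon

open CBPVEff LamMon

/-- CBN translation of graded-monadic source types into CBPV computation types;
the graded monad is translated as `⟦T_φ τ⟧n = F (U_φ (F (U_⊥ ⟦τ⟧n)))`. -/
def tyTransN {E : Type} (S : EffSig E) : MTy E → CTy E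
  | .unit => .F .unit
  | .arr τ₁ τ₂ => .arr (.thunk S.bot (tyTransN S τ₁)) (tyTransN S τ₂)
  | .wth τ₁ τ₂ => .wth (tyTransN S τ₁) (tyTransN S τ₂)
  | .sum τ₁ τ₂ => .F (.sum (.thunk S.bot (tyTransN S τ₁)) (.thunk S.bot (tyTransN S τ₂)))
  | .T φ τ => .F (.thunk φ (.F (.thunk S.bot (tyTransN S τ))))

/-- Levy's CBN translation of source terms into CBPV computations, extended
with the graded monadic operations. -/
def tmTransN : MTm → Comp
  | .var x => .force (.var x)
  | .lam e => .lam (tmTransN e)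
  | .app e₁ e₂ => .app (tmTransN e₁) (.thunk (tmTransN e₂))
  | .unit => .ret .unit
  | .seq e₁ e₂ => .letin (tmTransN e₁) (.seq (.var 0) (shift (tmTransN e₂)))
  | .wpair e₁ e₂ => .cpair (tmTransN e₁) (tmTransN e₂)
  | .fst e => .fst (tmTransN e)
  | .snd e => .snd (tmTransN e)
  | .inl e => .ret (.inl (.thunk (tmTransN e)))
  | .inr e => .ret (.inr (.thunk (tmTransN e)))
  | .case e e₁ e₂ =>
      .letin (tmTransN e) (.case (.var 0) (shift1 (tmTransN e₁)) (shift1 (tmTransN e₂)))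
  | .ret e => .ret (.thunk (.ret (.thunk (tmTransN e))))
  | .bind e₁ e₂ =>
      .ret (.thunk (.letin (.letin (tmTransN e₁) (.force (.var 0)))
        (.letin (tmTransN e₂) (.force (.var 0)))))
  | .tick => .ret (.thunk (.letin .tick (.ret (.thunk (.ret (.var 0))))))

/-!
The CBN translation of a term performs no effect when it is evaluated: latent effects occur only
under the thunk in `⟦T_φ τ⟧n = F (U_φ (F (U_⊥ ⟦τ⟧n)))`. Forcing the result of a pure computation of
this type thus costs exactly `φ`, because `⊥` is a left unit, so in the translation of `bind` the
two grades compose to `φ₁ · φ₂`. The translations of `seq` and `case` move a subterm under an extra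
binder, which is why typing has to be stable under renaming.
-/

namespace CBPVEff

/-- `f` is a renaming from the context `Γ` to the context `Δ`: it sends each de Bruijn index bound
in `Γ` to an index bound in `Δ` at the same type. Indices out of range for `Γ` are unconstrained. -/
def IsRenaming {α : Type*} (f : ℕ → ℕ) (Γ Δ : List α) : Prop :=
  ∀ ⦃x : ℕ⦄ ⦃A : α⦄, Γ[x]? = some A → Δ[f x]? = some A

theorem isRenaming_succ {α : Type*} (Γ : List α) (A : α) : IsRenaming Nat.succ Γ (A :: Γ) :=
  fun _ _ hx => hx

theorem IsRenaming.liftRen {α : Type*} {f : ℕ → ℕ} {Γ Δ : List α} (hf : IsRenaming f Γ Δ) (A : α) :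
    IsRenaming (liftRen f) (A :: Γ) (A :: Δ)
  | 0, _, hx => hx
  | _ + 1, _, hx => hf hx

variable {E : Type} {S : EffSig E}

mutual

theorem VHasTy.rename {Γ Δ : List (VTy E)} {f : ℕ → ℕ} {V : Val} {A : VTy E}
    (hf : IsRenaming f Γ Δ) : VHasTy S Γ V A → VHasTy S Δ (V.rename f) A
  | .var hx => .var (hf hx)
  | .unit => .unit
  | .thunk hM => .thunk (hM.rename hf)
  | .pair hV₁ hV₂ => .pair (hV₁.rename hf) (hV₂.rename hf)
  | .inl hV => .inl (hV.rename hf)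
  | .inr hV => .inr (hV.rename hf)

theorem CHasTy.rename {Γ Δ : List (VTy E)} {f : ℕ → ℕ} {M : Comp} {φ : E} {B : CTy E}
    (hf : IsRenaming f Γ Δ) : CHasTy S Γ M φ B → CHasTy S Δ (M.rename f) φ B
  | .tick hφ => .tick hφ
  | .lam hM => .lam (hM.rename (hf.liftRen _))
  | .app hM hV => .app (hM.rename hf) (hV.rename hf)
  | .force hV hφ => .force (hV.rename hf) hφ
  | .ret hV hφ => .ret (hV.rename hf) hφ
  | .letin hM hN hφ => .letin (hM.rename hf) (hN.rename (hf.liftRen _)) hφ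
  | .split hV hN => .split (hV.rename hf) (hN.rename ((hf.liftRen _).liftRen _))
  | .cpair hM₁ hM₂ => .cpair (hM₁.rename hf) (hM₂.rename hf)
  | .fst hM => .fst (hM.rename hf)
  | .snd hM => .snd (hM.rename hf)
  | .seq hV hM => .seq (hV.rename hf) (hM.rename hf)
  | .case hV hM₁ hM₂ =>
    .case (hV.rename hf) (hM₁.rename (hf.liftRen _)) (hM₂.rename (hf.liftRen _))

end

namespace CHasTy

variable {Γ : List (VTy E)} {M N : Comp} {φ : E} {A A' : VTy E} {B : CTy E}

theorem shift (hM : CHasTy S Γ M φ B) : CHasTy S (A :: Γ) (shift M) φ B :=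
  hM.rename (isRenaming_succ Γ A)

theorem shift1 (hM : CHasTy S (A' :: Γ) M φ B) : CHasTy S (A' :: A :: Γ) (shift1 M) φ B :=
  hM.rename ((isRenaming_succ Γ A).liftRen A')

theorem ret_pure {V : Val} (hV : VHasTy S Γ V A) : CHasTy S Γ (.ret V) S.bot (.F A) :=
  .ret hV (S.le_refl _)

theorem letin_pure_left (hM : CHasTy S Γ M S.bot (.F A)) (hN : CHasTy S (A :: Γ) N φ B) :
    CHasTy S Γ (.letin M N) φ B :=
  .letin hM hN ((S.bot_op φ).symm ▸ S.le_refl φ)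

theorem letin_pure_right (hM : CHasTy S Γ M φ (.F A)) (hN : CHasTy S (A :: Γ) N S.bot B) :
    CHasTy S Γ (.letin M N) φ B :=
  .letin hM hN ((S.op_bot φ).symm ▸ S.le_refl φ)

theorem letin_force (hM : CHasTy S Γ M S.bot (.F (.thunk φ B))) :
    CHasTy S Γ (.letin M (.force (.var 0))) φ B :=
  hM.letin_pure_left (.force (.var rfl) (S.le_refl φ))

end CHasTy

end CBPVEff

/-- Type preservation of the CBN translation of the graded-monadic λ-calculus:
if `Γ ⊢_mon e : τ` then `⟦Γ⟧n ⊢ ⟦e⟧n :^⊥ ⟦τ⟧n` in CBPV with effects; in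
particular the translated term type-checks with the pure effect `⊥`. -/
theorem cbn_monadic_translation_preservation {E : Type} (S : EffSig E)
    {Γ : List (MTy E)} {e : MTm} {τ : MTy E} (h : LamMon.HasTy S Γ e τ) :
    CHasTy S (Γ.map (fun τ' => VTy.thunk S.bot (tyTransN S τ'))) (tmTransN e)
      S.bot (tyTransN S τ) := by
  induction h with
  | var hx => exact .force (.var (by simp [hx])) (S.le_refl _)
  | lam _ ih => exact .lam ih
  | app _ _ ih₁ ih₂ => exact .app ih₁ (.thunk ih₂)
  | unit => exact .ret_pure .unit
  | seq _ _ ih₁ ih₂ => exact ih₁.letin_pure_left (.seq (.var rfl) ih₂.shift)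
  | wpair _ _ ih₁ ih₂ => exact .cpair ih₁ ih₂
  | fst _ ih => exact .fst ih
  | snd _ ih => exact .snd ih
  | inl _ ih => exact .ret_pure (.inl (.thunk ih))
  | inr _ ih => exact .ret_pure (.inr (.thunk ih))
  | case _ _ _ ih ih₁ ih₂ => exact ih.letin_pure_left (.case (.var rfl) ih₁.shift1 ih₂.shift1)
  | ret _ hφ ih => exact .ret_pure (.thunk (.ret (.thunk ih) hφ))
  | bind _ _ hφ ih₁ ih₂ => exact .ret_pure (.thunk (.letin ih₁.letin_force ih₂.letin_force hφ))
  | tick hφ =>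
    exact .ret_pure (.thunk (.letin_pure_right (.tick hφ)
      (.ret_pure (.thunk (.ret_pure (.var rfl))))))
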